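/- Let R, ε > 0, n ≥ 0, let K ⊆ Δ(S) be a simplicial complex, and let f: X → K be a map from a metric space X that has (R,ε) variation. If A ⊆ f⁻¹(K^(n)), then there exists a map r: B(A,R) → K^(n) that has (R,(8n+5)·ε) variation, agrees with f on A, and satisfies supp(r(x)) ⊆ supp(f(x)) for all x ∈ B(A,R). -/

import Mathlib

open Function Metric ENNReal

noncomputable section

/-- `ℓ¹(S)`: real-valued functions on `S` with finite `ℓ¹`-norm, with the `ℓ¹` metric. -/
abbrev ellOne (S : Type u) : Type u := lp (fun _ : S => ℝ) 1

/-- The full simplex `Δ(S) ⊆ ℓ¹(S)`. -/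
def fullSimplex (S : Type u) : Set (ellOne S) :=
  {p | (∀ s, 0 ≤ p s) ∧ (support (p : S → ℝ)).Finite ∧ ∑' s, p s = 1}

/-- The `n`-skeleton `Δ(S)^(n)` of the full simplex. -/
def skeleton (S : Type u) (n : ℕ) : Set (ellOne S) :=
  {p ∈ fullSimplex S | (support (p : S → ℝ)).encard ≤ n + 1}

/-- A simplicial complex on `S`: a subset of `Δ(S)` closed under passing to
points whose support is contained in the support of a member. -/
def IsSimplicialComplex {S : Type u} (K : Set (ellOne S)) : Prop :=
  K ⊆ fullSimplex S ∧
    ∀ p ∈ K, ∀ q ∈ fullSimplex S,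
      support (q : S → ℝ) ⊆ support (p : S → ℝ) → q ∈ K

/-- The star of a vertex `v` in `K`. -/
def star {S : Type u} (K : Set (ellOne S)) (v : S) : Set (ellOne S) :=
  {p ∈ K | 0 < p v}

/-- `f` is `(λ, C)`-Lipschitz. -/
def IsLipschitzLC {X Y : Type*} [MetricSpace X] [MetricSpace Y]
    (l C : ℝ) (f : X → Y) : Prop :=
  ∀ x y, dist (f x) (f y) ≤ l * dist x y + C

/-- A family of sets is uniformly bounded. -/
def UniformlyBounded {X : Type*} [MetricSpace X] {ι : Type*} (U : ι → Set X) : Prop :=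
  ∃ M : ℝ, ∀ i, ∀ x ∈ U i, ∀ y ∈ U i, dist x y ≤ M

/-- `U` is a cover of the whole space. -/
def IsCover {X : Type*} {ι : Type*} (U : ι → Set X) : Prop := ∀ x, ∃ i, x ∈ U i

/-- The Lebesgue number `inf_x sup_i dist(x, X∖Uᵢ)` of a family, as a value in `ℝ≥0∞`. -/
def lebesgue {X : Type*} [MetricSpace X] {ι : Type*} (U : ι → Set X) : ℝ≥0∞ :=
  ⨅ x : X, ⨆ i, EMetric.infEdist x (U i)ᶜ

/-- The multiplicity of `U` is at most `m`. -/
def MultiplicityLE {X : Type*} [MetricSpace X] {ι : Type*} (U : ι → Set X) (m : ℕ) : Prop :=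
  ∀ x : X, {i | 0 < Metric.infDist x ((U i)ᶜ)}.encard ≤ m

/-- `f : X → K` is a `δ`-partition of unity. -/
def IsDeltaPartitionOfUnity {X : Type*} [MetricSpace X] {S : Type u}
    (δ : ℝ) (K : Set (ellOne S)) (f : X → ellOne S) : Prop :=
  (∀ x, f x ∈ K) ∧ IsLipschitzLC δ δ f ∧
    UniformlyBounded (fun v : S => f ⁻¹' star K v) ∧
    ENNReal.ofReal (1 / δ) ≤ lebesgue (fun v : S => f ⁻¹' star K v)

/-- `X` is large scale paracompact. -/
def LSParacompact (X : Type u) [MetricSpace X] : Prop :=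
  ∀ (ι : Type u) (U : ι → Set X), IsCover U → UniformlyBounded U →
    ∀ l C : ℝ, 0 < l → 0 < C →
      ∃ (S : Type u) (K : Set (ellOne S)) (f : X → ellOne S),
        IsSimplicialComplex K ∧ (∀ x, f x ∈ K) ∧ IsLipschitzLC l C f ∧
        UniformlyBounded (fun v : S => f ⁻¹' star K v) ∧
        ∀ i, ∃ v : S, U i ⊆ f ⁻¹' star K v

/-- `X` has asymptotic dimension at most `n`. -/
def AsdimLE (X : Type u) [MetricSpace X] (n : ℕ) : Prop :=
  ∀ R : ℝ, 0 < R → ∃ (ι : Type u) (U : ι → Set X),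
    IsCover U ∧ UniformlyBounded U ∧ MultiplicityLE U (n + 1) ∧
    ENNReal.ofReal R ≤ lebesgue U

/-- `X` has Property A. -/
def PropertyA (X : Type u) [MetricSpace X] : Prop :=
  ∀ R ε : ℝ, 0 < R → 0 < ε →
    ∃ (M : ℝ) (S : Type u) (φ : S → X → ℝ), 0 < M ∧
      (∀ s x, 0 ≤ φ s x ∧ φ s x ≤ 1) ∧
      (∀ x, (support fun s => φ s x).Finite) ∧
      (∀ x, ∑' s, φ s x = 1) ∧
      (∀ x y, dist x y ≤ R → ∑' s, |φ s x - φ s y| < ε) ∧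
      (∀ s, ∀ x ∈ support (φ s), ∀ y ∈ support (φ s), dist x y ≤ M)

/-- `f` has `(R, ε)` variation. -/
def HasVariation {X Y : Type*} [MetricSpace X] [MetricSpace Y] (R ε : ℝ) (f : X → Y) : Prop :=
  ∀ x y, dist x y ≤ R → dist (f x) (f y) < ε

/-- `g` is a coarse embedding. -/
def CoarseEmbedding {X Y : Type*} [MetricSpace X] [MetricSpace Y] (g : X → Y) : Prop :=
  ∃ ρminus ρplus : ℝ → ℝ, Monotone ρminus ∧ Monotone ρplus ∧
    Filter.Tendsto ρminus Filter.atTop Filter.atTop ∧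
    ∀ x y, ρminus (dist x y) ≤ dist (g x) (g y) ∧ dist (g x) (g y) ≤ ρplus (dist x y)

/-- `X` has bounded geometry: balls of any fixed radius have uniformly bounded cardinality. -/
def BoundedGeometry (X : Type*) [MetricSpace X] : Prop :=
  ∀ r : ℝ, 0 < r → ∃ N : ℕ, ∀ x : X, (Metric.ball x r).encard ≤ N

/-!
Let `p` be a point of `Δ(S)`, let `q` be a point of `Δ(S)^(n)`, and let `m` be the mass that `p`
carries off the support of `q`. Moving this mass to one vertex of `supp p`, chosen inside `supp q`
when possible, brings `p` into `Δ(S)^(n)` and displaces it by at most `2m`. Since `p` and `q` have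
the same total mass, `q` has an excess `m` over `p` elsewhere, whence `2m ≤ d(p, q)`. With
`p = f x` and `q = f a`, where `d(x, a) < R` and `a ∈ A`, the point `f x` is displaced by less
than `ε`, and the resulting map has `(R, 3ε)` variation.
-/

namespace ellOne

variable {S : Type*}

theorem hasSum_norm (p : ellOne S) : HasSum (fun s => ‖p s‖) ‖p‖ := by
  simpa using lp.hasSum_norm (by simp) p

theorem summable (p : ellOne S) : Summable fun s => p s :=
  (lp.memℓp p).summable_of_one

theorem norm_sum_single [DecidableEq S] (F : Finset S) (c : S → ℝ) :
    ‖(∑ s ∈ F, lp.single 1 s (c s) : ellOne S)‖ = ∑ s ∈ F, ‖c s‖ := by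
  simpa using lp.norm_sum_single (E := fun _ : S => ℝ) (p := 1) (by simp) c F

theorem two_mul_sum_le_dist {p q : ellOne S} (hpq : ∑' s, p s = ∑' s, q s) {F : Finset S}
    (hq : ∀ s ∈ F, q s = 0) : 2 * ∑ s ∈ F, p s ≤ dist p q := by
  -- The deviations of `p` from `q` sum to zero, so their norm is twice their positive part.
  have hsum : HasSum (fun s => ‖(p - q) s‖ + (p s - q s)) (dist p q) := by
    simpa [dist_eq_norm, hpq] using
      (hasSum_norm (p - q)).add (p.summable.hasSum.sub q.summable.hasSum)
  calc 2 * ∑ s ∈ F, p s = ∑ s ∈ F, 2 * p s := Finset.mul_sum ..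
    _ ≤ ∑ s ∈ F, (‖(p - q) s‖ + (p s - q s)) := Finset.sum_le_sum fun s hs => by
        have := Real.le_norm_self (p s)
        simp only [lp.coeFn_sub, Pi.sub_apply, hq s hs, sub_zero]
        linarith
    _ ≤ dist p q := sum_le_hasSum F (fun s _ => by
        have := neg_abs_le (p s - q s)
        simp only [lp.coeFn_sub, Pi.sub_apply, Real.norm_eq_abs]
        linarith) hsum

open scoped Classical in
/-- The element of `ℓ¹(S)` obtained from `p` by moving all the mass on the finite set `F` to the
vertex `v`; it is the push-forward of `p` along the map that sends `F` to `v` and fixes the other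
vertices. -/
def collapse (F : Finset S) (v : S) (p : ellOne S) : ellOne S :=
  p - ∑ s ∈ F, lp.single 1 s (p s) + lp.single 1 v (∑ s ∈ F, p s)

variable (F : Finset S) (v : S) (p : ellOne S)

open scoped Classical in
theorem coe_collapse :
    (collapse F v p : S → ℝ) =
      (p : S → ℝ) - (F : Set S).indicator p + Pi.single v (∑ s ∈ F, p s) := by
  have hsum : ((∑ s ∈ F, lp.single 1 s (p s) : ellOne S) : S → ℝ) = (F : Set S).indicator p := by
    ext t
    rw [lp.coeFn_sum]
    simp [Finset.sum_pi_single, Set.indicator_apply]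
  rw [collapse, lp.coeFn_add, lp.coeFn_sub, hsum, lp.coeFn_single]

theorem support_collapse_subset :
    support (collapse F v p : S → ℝ) ⊆ insert v (support (p : S → ℝ) \ F) := by
  classical
  rw [coe_collapse, ← Set.indicator_compl]
  refine (support_add _ _).trans (Set.union_subset ?_ ?_)
  · rw [Set.support_indicator, Set.inter_comm, ← Set.sdiff_eq]
    exact Set.subset_insert ..
  · exact Pi.support_single_subset.trans (Set.singleton_subset_iff.2 (Set.mem_insert ..))

theorem tsum_collapse : ∑' s, collapse F v p s = ∑' s, p s := by
  classical
  have hF : HasSum ((F : Set S).indicator p) (∑ s ∈ F, p s) :=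
    hasSum_subtype_iff_indicator.1 (F.hasSum p)
  rw [coe_collapse]
  simpa using ((p.summable.hasSum.sub hF).add (hasSum_pi_single v (∑ s ∈ F, p s))).tsum_eq

theorem dist_collapse_le : dist (collapse F v p) p ≤ 2 * ∑ s ∈ F, ‖p s‖ := by
  classical
  calc dist (collapse F v p) p
      = ‖lp.single 1 v (∑ s ∈ F, p s) - ∑ s ∈ F, lp.single 1 s (p s)‖ := by
        rw [dist_eq_norm, collapse]
        congr 1
        abel
    _ ≤ ‖∑ s ∈ F, p s‖ + ∑ s ∈ F, ‖p s‖ := by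
        rw [← norm_sum_single F, ← lp.norm_single (E := fun _ : S => ℝ) one_pos v]
        exact norm_sub_le ..
    _ ≤ 2 * ∑ s ∈ F, ‖p s‖ := by linarith [norm_sum_le F fun s => p s]

variable {F v p}

theorem collapse_nonneg (hp : ∀ s, 0 ≤ p s) (s : S) : 0 ≤ collapse F v p s := by
  classical
  rw [coe_collapse, ← Set.indicator_compl]
  have hsingle : 0 ≤ (Pi.single v (∑ t ∈ F, p t) : S → ℝ) :=
    Pi.single_nonneg.2 (Finset.sum_nonneg fun t _ => hp t)
  exact add_nonneg (Set.indicator_nonneg (fun t _ => hp t) s) (hsingle s)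

theorem collapse_mem_fullSimplex (hp : p ∈ fullSimplex S) : collapse F v p ∈ fullSimplex S :=
  ⟨collapse_nonneg hp.1, (hp.2.1.sdiff.insert v).subset (support_collapse_subset F v p),
    (tsum_collapse F v p).trans hp.2.2⟩

end ellOne

theorem support_nonempty_of_mem_fullSimplex {S : Type*} {p : ellOne S}
    (hp : p ∈ fullSimplex S) : (support (p : S → ℝ)).Nonempty := by
  rw [support_nonempty_iff]
  intro h
  simpa [h] using hp.2.2

theorem exists_mem_encard_insert_inter_le {α : Type*} {s t : Set α} {n : ℕ} (hs : s.Nonempty)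
    (ht : t.encard ≤ n + 1) : ∃ v ∈ s, (insert v (s ∩ t)).encard ≤ n + 1 := by
  rcases (s ∩ t).eq_empty_or_nonempty with hst | ⟨v, hv⟩
  · obtain ⟨v, hv⟩ := hs
    exact ⟨v, hv, by simp [hst]⟩
  · refine ⟨v, hv.1, ?_⟩
    rw [Set.insert_eq_of_mem hv]
    exact (Set.encard_le_encard Set.inter_subset_right).trans ht

theorem exists_mem_skeleton_dist_le {S : Type*} {n : ℕ} {p q : ellOne S}
    (hp : p ∈ fullSimplex S) (hq : q ∈ skeleton S n) :
    ∃ r ∈ skeleton S n, support (r : S → ℝ) ⊆ support (p : S → ℝ) ∧ dist r p ≤ dist p q := by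
  obtain ⟨v, hv, hcard⟩ :=
    exists_mem_encard_insert_inter_le (support_nonempty_of_mem_fullSimplex hp) hq.2
  obtain ⟨F, hF⟩ : ∃ F : Finset S, (F : Set S) = support (p : S → ℝ) \ support (q : S → ℝ) :=
    hp.2.1.sdiff.exists_finset_coe
  have hsupp := ellOne.support_collapse_subset F v p
  rw [hF, Set.sdiff_sdiff_right_self] at hsupp
  have hqF : ∀ s ∈ F, q s = 0 := fun s hs => notMem_support.1 (hF.subset hs).2
  refine ⟨ellOne.collapse F v p,
    ⟨ellOne.collapse_mem_fullSimplex hp, (Set.encard_le_encard hsupp).trans hcard⟩,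
    hsupp.trans (Set.insert_subset hv Set.inter_subset_left), ?_⟩
  calc dist (ellOne.collapse F v p) p ≤ 2 * ∑ s ∈ F, ‖p s‖ := ellOne.dist_collapse_le F v p
    _ = 2 * ∑ s ∈ F, p s := by simp only [Real.norm_of_nonneg (hp.1 _)]
    _ ≤ dist p q := ellOne.two_mul_sum_le_dist (hp.2.2.trans hq.1.2.2.symm) hqF

namespace HasVariation

variable {X Y : Type*} [MetricSpace X] [MetricSpace Y] {R ε : ℝ} {f : X → Y}

theorem mono {ε' : ℝ} (hf : HasVariation R ε f) (hε : ε ≤ ε') : HasVariation R ε' f :=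
  fun x y hxy => (hf x y hxy).trans_le hε

theorem domRestrict (hf : HasVariation R ε f) (B : Set X) : HasVariation R ε (B.domRestrict f) :=
  fun x y hxy => hf x y hxy

theorem of_dist_le {δ : ℝ} {g : X → Y} (hf : HasVariation R ε f)
    (hg : ∀ x, dist (g x) (f x) ≤ δ) : HasVariation R (ε + 2 * δ) g := fun x y hxy =>
  calc dist (g x) (g y) ≤ dist (g x) (f x) + dist (f x) (f y) + dist (f y) (g y) :=
        dist_triangle4 ..
    _ < ε + 2 * δ := by linarith [hg x, hf x y hxy, hg y, dist_comm (f y) (g y)]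

end HasVariation

theorem exists_dist_lt_of_mem_biUnion_ball {X : Type*} [PseudoMetricSpace X] {A : Set X} {R : ℝ}
    {x : X} (hx : x ∈ ⋃ a ∈ A, ball a R) : ∃ a ∈ A, dist x a < R ∧ (x ∈ A → a = x) := by
  obtain ⟨a, ha, hxa⟩ := Set.mem_iUnion₂.1 hx
  by_cases hxA : x ∈ A
  · exact ⟨x, hxA, by simpa using pos_of_mem_ball hxa, fun _ => rfl⟩
  · exact ⟨a, ha, hxa, fun h => absurd h hxA⟩

theorem extend_over_neighborhood_general {X : Type*} [MetricSpace X] {S : Type*}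
    (R ε : ℝ) (n : ℕ) (K : Set (ellOne S)) (hK : IsSimplicialComplex K)
    (f : X → ellOne S) (hfK : ∀ x, f x ∈ K) (hvar : HasVariation R ε f)
    (A : Set X) (hA : ∀ a ∈ A, f a ∈ skeleton S n) :
    ∃ r : (⋃ a ∈ A, ball a R : Set X) → ellOne S,
      (∀ x, r x ∈ K ∩ skeleton S n) ∧
      HasVariation R (3 * ε) r ∧
      (∀ x : (⋃ a ∈ A, ball a R : Set X), (x : X) ∈ A → r x = f x) ∧
      (∀ x : (⋃ a ∈ A, ball a R : Set X),
        support (r x : S → ℝ) ⊆ support (f x : S → ℝ)) := by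
  choose a haA haR ha using fun x : (⋃ a ∈ A, ball a R : Set X) =>
    exists_dist_lt_of_mem_biUnion_ball x.2
  choose r hr hsupp hdist using fun x : (⋃ a ∈ A, ball a R : Set X) =>
    exists_mem_skeleton_dist_le (hK.1 (hfK x)) (hA (a x) (haA x))
  refine ⟨r, fun x => ⟨hK.2 _ (hfK x) _ (hr x).1 (hsupp x), hr x⟩, ?_, fun x hx => ?_, hsupp⟩
  · have hclose : ∀ x, dist (r x) (f x) ≤ ε := fun x =>
      (hdist x).trans (hvar x (a x) (haR x).le).le
    exact ((hvar.domRestrict _).of_dist_le hclose).mono (by linarith)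
  · refine dist_le_zero.1 ((hdist x).trans_eq ?_)
    rw [ha x hx, dist_self]

/-- a map `f : X → K` with `(R, ε)` variation sending `A` into `K^(n)`
extends over `B(A, R)` to a map `r` into `K^(n)` with `(R, (8n+5)·ε)` variation that
agrees with `f` on `A` and satisfies `supp (r x) ⊆ supp (f x)`. -/
theorem extend_over_neighborhood {X : Type*} [MetricSpace X] {S : Type u}
    (R ε : ℝ) (hR : 0 < R) (hε : 0 < ε) (n : ℕ)
    (K : Set (ellOne S)) (hK : IsSimplicialComplex K)
    (f : X → ellOne S) (hfK : ∀ x, f x ∈ K) (hvar : HasVariation R ε f)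
    (A : Set X) (hA : ∀ a ∈ A, f a ∈ K ∩ skeleton S n) :
    ∃ r : (⋃ a ∈ A, Metric.ball a R : Set X) → ellOne S,
      (∀ x, r x ∈ K ∩ skeleton S n) ∧
      HasVariation R ((8 * n + 5) * ε) r ∧
      (∀ x : (⋃ a ∈ A, Metric.ball a R : Set X), (x : X) ∈ A → r x = f (x : X)) ∧
      (∀ x : (⋃ a ∈ A, Metric.ball a R : Set X),
        support ((r x : S → ℝ)) ⊆ support ((f (x : X) : S → ℝ))) := by
  obtain ⟨r, hrK, hr, hrA, hsupp⟩ :=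
    extend_over_neighborhood_general R ε n K hK f hfK hvar A fun a ha => (hA a ha).2
  exact ⟨r, hrK, hr.mono (by gcongr; linarith [n.cast_nonneg (α := ℝ)]), hrA, hsupp⟩

end
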